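/- Let f be a polynomial of degree at most k on ℝ^n (n ≥ 3) and β a multi-index with |β| ≥ k+1. Then for every x with |x| < R, ∫_{|y|=R} D_x^β Γ(x−y) f(y) dσ(y) = 0, where Γ is the fundamental solution of the Laplacian. -/

import Mathlib

open MeasureTheory Metric

noncomputable section

/-- Surface area of the unit sphere in ℝⁿ. -/
def sphArea (n : ℕ) : ℝ :=
  (μH[(n : ℝ) - 1] (sphere (0 : EuclideanSpace ℝ (Fin n)) 1)).toReal

/-- The fundamental solution of the Laplacian in ℝⁿ, `Γ(x) = c_n |x|^{2-n}`
with `c_n = 1/(n(2-n)ω_n)`. -/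
def fundSol (n : ℕ) (x : EuclideanSpace ℝ (Fin n)) : ℝ :=
  (1 / (n * (2 - (n : ℝ)) * sphArea n)) * ‖x‖ ^ ((2 : ℝ) - n)

/-- The `i`-th standard basis vector. -/
def ee {n : ℕ} (i : Fin n) : EuclideanSpace ℝ (Fin n) := EuclideanSpace.single i 1

/-!
Let `σ` be the surface measure of the sphere of radius `R`, let `f` be homogeneous of degree `d`
and let `u = ∫ f(y) K(· - y) dσ(y)`, with `K` smooth, radial and harmonic off `0`. Infinitesimal
rotations `A` commute with this potential, because `σ` and `K` are invariant, and hence so does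
their Casimir operator `½ ∑ A²`. With `N = x·∇` the Euler operator, that operator equals
`|x|² Δ - N (N + n - 2)`. As `Δ u = 0` inside the sphere and `N f = d f`, comparing its values on
`u` and on `f` gives
`(N - d) (N + d + n - 2) u = -R² ∫ (Δ f)(y) K(· - y) dσ(y)`.
By induction on `d`, the `m`-th derivative of the right-hand side vanishes in the ball for `m > d`.
Since `D^m (N + a) = (N + a + m) D^m`, and `N + a` is injective on smooth functions on the ball
for `a > 0`, both factors on the left can be cancelled, so that `D^m u = 0`.
-/

open Set Filter Topology InnerProductSpace
open scoped ContDiff Laplacian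

section EulerOperator

variable {E F G : Type*} [NormedAddCommGroup E] [NormedSpace ℝ E]
  [NormedAddCommGroup F] [NormedSpace ℝ F] [NormedAddCommGroup G] [NormedSpace ℝ G]

/-- The operator `x·∇ + a`. It is the derivative of `t ↦ t ^ a • u (t • x)` at `t = 1`, so that
`eulerShift (-d) u = 0` is the infinitesimal form of homogeneity of degree `d`. -/
def eulerShift (a : ℝ) (u : E → F) (x : E) : F :=
  fderiv ℝ u x x + a • u x

variable {a : ℝ} {u : E → F} {x : E}

lemma eulerShift_clm_comp (L : F →L[ℝ] G) (hu : DifferentiableAt ℝ u x) :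
    eulerShift a (L ∘ u) x = L (eulerShift a u x) := by
  simp [eulerShift, (L.hasFDerivAt.comp x hu.hasFDerivAt).fderiv]

lemma fderiv_eulerShift (hu : ContDiffAt ℝ 2 u x) :
    fderiv ℝ (eulerShift a u) x = eulerShift (a + 1) (fderiv ℝ u) x := by
  have hu₁ : HasFDerivAt u (fderiv ℝ u x) x := (hu.differentiableAt (by simp)).hasFDerivAt
  have hu₂ : HasFDerivAt (fderiv ℝ u) (fderiv ℝ (fderiv ℝ u) x) x :=
    ((hu.fderiv_right (m := 1) le_rfl).differentiableAt (by simp)).hasFDerivAt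
  have hsymm : IsSymmSndFDerivAt ℝ u x := hu.isSymmSndFDerivAt (by simp)
  have h : HasFDerivAt (eulerShift a u) _ x :=
    (hu₂.clm_apply (hasFDerivAt_id x)).add (hu₁.const_smul a)
  ext w
  simp [h.fderiv, eulerShift, hsymm.eq w x, add_smul]
  abel

lemma eulerShift_eulerShift {b : ℝ} (hu : ContDiffAt ℝ 2 u x) :
    eulerShift a (eulerShift b u) x =
      fderiv ℝ (fderiv ℝ u) x x x + (a + b + 1) • fderiv ℝ u x x + (a * b) • u x := by
  rw [eulerShift, fderiv_eulerShift hu]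
  simp only [eulerShift, _root_.add_apply, _root_.smul_apply]
  module

lemma contDiffAt_eulerShift {m n : ℕ∞ω} (hu : ContDiffAt ℝ n u x) (hmn : m + 1 ≤ n) :
    ContDiffAt ℝ m (eulerShift a u) x :=
  ((hu.fderiv_right hmn).clm_apply contDiffAt_id).add
    ((hu.of_le (le_self_add.trans hmn)).const_smul a)

lemma iteratedFDeriv_eulerShift {m : ℕ} (hu : ContDiffAt ℝ (m + 1) u x) :
    iteratedFDeriv ℝ m (eulerShift a u) x = eulerShift (a + m) (iteratedFDeriv ℝ m u) x := by
  induction m generalizing x with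
  | zero =>
    have hu₁ : DifferentiableAt ℝ u x := hu.differentiableAt (by simp)
    simp only [iteratedFDeriv_zero_eq_comp, Function.comp_apply, Nat.cast_zero, add_zero]
    exact (eulerShift_clm_comp (continuousMultilinearCurryFin0 ℝ E
      F).symm.toContinuousLinearEquiv.toContinuousLinearMap hu₁).symm
  | succ m ih =>
    have hev : iteratedFDeriv ℝ m (eulerShift a u) =ᶠ[𝓝 x]
        eulerShift (a + m) (iteratedFDeriv ℝ m u) := by
      filter_upwards [hu.eventually (by exact_mod_cast ENat.natCast_ne_top _)] with y hy
      exact ih (hy.of_le (by push_cast; exact le_self_add))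
    have hm : ContDiffAt ℝ 2 (iteratedFDeriv ℝ m u) x :=
      hu.iteratedFDeriv_right (by push_cast; rw [add_assoc, one_add_one_eq_two, add_comm])
    have hdiff : DifferentiableAt ℝ (fderiv ℝ (iteratedFDeriv ℝ m u)) x :=
      (hm.fderiv_right (m := 1) le_rfl).differentiableAt (by simp)
    rw [iteratedFDeriv_succ_eq_comp_left, iteratedFDeriv_succ_eq_comp_left, Function.comp_apply,
      hev.fderiv_eq, fderiv_eulerShift hm, Nat.cast_succ, ← add_assoc]
    exact (eulerShift_clm_comp (F := E →L[ℝ] E [×m]→L[ℝ] F) (continuousMultilinearCurryLeftEquiv ℝ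
      (fun _ : Fin (m + 1) ↦ E) F).symm.toContinuousLinearEquiv.toContinuousLinearMap hdiff).symm

lemma hasDerivAt_comp_smul_const {t : ℝ} (hu : DifferentiableAt ℝ u (t • x)) :
    HasDerivAt (fun t : ℝ ↦ u (t • x)) (fderiv ℝ u (t • x) x) t := by
  have hray : HasDerivAt (fun t : ℝ ↦ t • x) x t := by
    simpa using (hasDerivAt_id t).smul_const x
  exact hu.hasFDerivAt.comp_hasDerivAt t hray

/- Along a ray, `t ↦ t ^ a • u (t • x)` has zero derivative and vanishes at `t = 0`. -/
lemma eq_zero_of_eulerShift_eq_zero {s : Set E} (hs : StarConvex ℝ 0 s) (ha : 0 < a)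
    (hu : ∀ y ∈ s, DifferentiableAt ℝ u y) (h : ∀ y ∈ s, eulerShift a u y = 0) (hx : x ∈ s) :
    u x = 0 := by
  set g : ℝ → F := fun t ↦ t ^ a • u (t • x)
  have hmem (t : ℝ) (ht₀ : 0 ≤ t) (ht₁ : t ≤ 1) : t • x ∈ s := hs.smul_mem hx ht₀ ht₁
  have hderiv (t : ℝ) (ht₀ : 0 < t) (ht₁ : t ≤ 1) : HasDerivAt g 0 t := by
    have heuler : t • fderiv ℝ u (t • x) x + a • u (t • x) = 0 := by
      simpa only [eulerShift, map_smul] using h _ (hmem t ht₀.le ht₁)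
    refine ((Real.hasDerivAt_rpow_const (Or.inl ht₀.ne')).smul
      (hasDerivAt_comp_smul_const (hu _ (hmem t ht₀.le ht₁)))).congr_deriv ?_
    calc t ^ a • fderiv ℝ u (t • x) x + (a * t ^ (a - 1)) • u (t • x)
        = t ^ (a - 1) • (t • fderiv ℝ u (t • x) x + a • u (t • x)) := by
          rw [smul_add, smul_smul, smul_smul, ← Real.rpow_add_one ht₀.ne', sub_add_cancel,
            mul_comm a]
      _ = 0 := by rw [heuler, smul_zero]
  have hconst : ∀ t ∈ Ioo (0 : ℝ) 1, g t = g 1 := fun t ht ↦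
    (constant_of_has_deriv_right_zero
      (fun r hr ↦ (hderiv r (ht.1.trans_le hr.1) hr.2).continuousAt.continuousWithinAt)
      (fun r hr ↦ (hderiv r (ht.1.trans_le hr.1) hr.2.le).hasDerivWithinAt) 1
      (right_mem_Icc.2 ht.2.le)).symm
  have hcont : ContinuousAt g 0 :=
    (Real.continuousAt_rpow_const 0 a (Or.inr ha.le)).smul
      (hasDerivAt_comp_smul_const (hu _ (hmem 0 le_rfl zero_le_one))).continuousAt
  have hlim : Tendsto g (𝓝[>] 0) (𝓝 (g 1)) :=
    tendsto_const_nhds.congr' (by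
      filter_upwards [Ioo_mem_nhdsGT zero_lt_one] with t ht using (hconst t ht).symm)
  simpa [g, ha.ne'] using tendsto_nhds_unique hlim (hcont.tendsto.mono_left inf_le_left)

lemma eulerShift_neg_eq_zero (hu : DifferentiableAt ℝ u x)
    (h : ∀ t : ℝ, 0 < t → u (t • x) = t ^ a • u x) : eulerShift (-a) u x = 0 := by
  have hray : HasDerivAt (fun t : ℝ ↦ u (t • x)) (fderiv ℝ u x x) 1 := by
    simpa using hasDerivAt_comp_smul_const (t := 1) (by rwa [one_smul])
  have hpow : HasDerivAt (fun t : ℝ ↦ u (t • x)) (a • u x) 1 := by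
    have := (Real.hasDerivAt_rpow_const (p := a) (Or.inl one_ne_zero)).smul_const (u x)
    rw [Real.one_rpow, mul_one] at this
    exact this.congr_of_eventuallyEq <| by
      filter_upwards [lt_mem_nhds zero_lt_one] with t ht using h t ht
  rw [eulerShift, hray.unique hpow, neg_smul, add_neg_cancel]

lemma iteratedFDeriv_eq_zero_of_eulerShift {m : ℕ} {s : Set E} (hs : IsOpen s)
    (hs₀ : StarConvex ℝ 0 s) (ham : 0 < a + m) (hu : ContDiffOn ℝ ∞ u s)
    (h : ∀ y ∈ s, iteratedFDeriv ℝ m (eulerShift a u) y = 0) (hx : x ∈ s) :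
    iteratedFDeriv ℝ m u x = 0 := by
  have hu' (y : E) (hy : y ∈ s) : ContDiffAt ℝ ∞ u y := hu.contDiffAt (hs.mem_nhds hy)
  have hdiff (y : E) (hy : y ∈ s) : DifferentiableAt ℝ (iteratedFDeriv ℝ m u) y :=
    (hu' y hy).differentiableAt_iteratedFDeriv (by exact_mod_cast ENat.natCast_lt_top m)
  refine eq_zero_of_eulerShift_eq_zero hs₀ ham hdiff (fun y hy ↦ ?_) hx
  rw [← iteratedFDeriv_eulerShift ((hu' y hy).of_le (by exact_mod_cast le_top)), h y hy]

lemma contDiffOn_eulerShift {s : Set E} (hs : IsOpen s) (hu : ContDiffOn ℝ ∞ u s) :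
    ContDiffOn ℝ ∞ (eulerShift a u) s := fun _ hy ↦
  (contDiffAt_eulerShift (hu.contDiffAt (hs.mem_nhds hy)) le_rfl).contDiffWithinAt

end EulerOperator

lemma integrable_of_continuousOn_of_ae_mem {X G : Type*} [TopologicalSpace X] [MeasurableSpace X]
    [OpensMeasurableSpace X] [T2Space X] [NormedAddCommGroup G] {μ : Measure X}
    [IsFiniteMeasure μ] {S : Set X} {φ : X → G} (hS : IsCompact S) (hμ : ∀ᵐ y ∂μ, y ∈ S)
    (hφ : ContinuousOn φ S) : Integrable φ μ := by
  have h : IntegrableOn φ S μ := hφ.integrableOn_compact hS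
  rwa [IntegrableOn, Measure.restrict_eq_self_of_ae_mem hμ] at h

lemma contDiffOn_iteratedFDeriv {E G : Type*} [NormedAddCommGroup E] [NormedSpace ℝ E]
    [NormedAddCommGroup G] [NormedSpace ℝ G] {u : E → G} {s : Set E} (hs : IsOpen s)
    (hu : ContDiffOn ℝ ∞ u s) (m : ℕ) : ContDiffOn ℝ ∞ (iteratedFDeriv ℝ m u) s := fun z hz ↦
  ((hu.contDiffAt (hs.mem_nhds hz)).iteratedFDeriv_right
    (by exact_mod_cast le_top)).contDiffWithinAt

section LayerPotential

variable {E G H : Type*} [NormedAddCommGroup E] [MeasurableSpace E]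
  [NormedAddCommGroup G] [NormedSpace ℝ G] [NormedAddCommGroup H] [NormedSpace ℝ H]

/-- The potential with kernel `K` of the density `f` on the measure `σ`; for `σ` the surface
measure of a hypersurface and `K` a fundamental solution this is the single layer potential. -/
def layerPotential (σ : Measure E) (K : E → G) (f : E → ℝ) (x : E) : G :=
  ∫ y, f y • K (x - y) ∂σ

variable {σ : Measure E} {S : Set E} {K : E → G} {f : E → ℝ} {x : E}

lemma layerPotential_const_mul (c : ℝ) :
    layerPotential σ K (fun y ↦ c * f y) x = c • layerPotential σ K f x := by
  simp only [layerPotential, mul_smul, integral_smul]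

lemma layerPotential_congr {K' : E → G} {f' : E → ℝ} (hσ : ∀ᵐ y ∂σ, y ∈ S)
    (hK : EqOn K K' {0}ᶜ) (hf : EqOn f f' S) (hx : x ∉ S) :
    layerPotential σ K f x = layerPotential σ K' f' x :=
  integral_congr_ae <| by
    filter_upwards [hσ] with y hy
    rw [hf hy, hK (sub_ne_zero.2 (ne_of_mem_of_not_mem hy hx).symm)]

variable [BorelSpace E] [IsFiniteMeasure σ]

lemma integrable_layerPotential (hS : IsCompact S) (hσ : ∀ᵐ y ∂σ, y ∈ S)
    (hK : ContinuousOn K {0}ᶜ) (hf : ContinuousOn f S) (hx : x ∉ S) :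
    Integrable (fun y ↦ f y • K (x - y)) σ :=
  integrable_of_continuousOn_of_ae_mem hS hσ <| hf.smul <| hK.comp (by fun_prop)
    fun _ hy ↦ sub_ne_zero.2 (ne_of_mem_of_not_mem hy hx).symm

lemma layerPotential_sub {g : E → ℝ} (hS : IsCompact S) (hσ : ∀ᵐ y ∂σ, y ∈ S)
    (hK : ContinuousOn K {0}ᶜ) (hf : ContinuousOn f S) (hg : ContinuousOn g S) (hx : x ∉ S) :
    layerPotential σ K (fun y ↦ f y - g y) x =
      layerPotential σ K f x - layerPotential σ K g x := by
  simp only [layerPotential, sub_smul]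
  exact integral_sub (integrable_layerPotential hS hσ hK hf hx)
    (integrable_layerPotential hS hσ hK hg hx)

lemma layerPotential_sum {ι : Type*} {s : Finset ι} {g : ι → E → ℝ} (hS : IsCompact S)
    (hσ : ∀ᵐ y ∂σ, y ∈ S) (hK : ContinuousOn K {0}ᶜ) (hg : ∀ i ∈ s, ContinuousOn (g i) S)
    (hx : x ∉ S) :
    layerPotential σ K (fun y ↦ ∑ i ∈ s, g i y) x = ∑ i ∈ s, layerPotential σ K (g i) x := by
  simp only [layerPotential, Finset.sum_smul]
  exact integral_finsetSum s fun i hi ↦ integrable_layerPotential hS hσ hK (hg i hi) hx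

lemma layerPotential_clm_comp [CompleteSpace G] [CompleteSpace H] (L : G →L[ℝ] H)
    (hS : IsCompact S) (hσ : ∀ᵐ y ∂σ, y ∈ S) (hK : ContinuousOn K {0}ᶜ) (hf : ContinuousOn f S)
    (hx : x ∉ S) : layerPotential σ (L ∘ K) f x = L (layerPotential σ K f x) := by
  simp only [layerPotential, Function.comp_apply, ← map_smul]
  exact L.integral_comp_comm (integrable_layerPotential hS hσ hK hf hx)

variable [NormedSpace ℝ E] [ProperSpace E]

lemma hasFDerivAt_layerPotential (hS : IsCompact S) (hσ : ∀ᵐ y ∂σ, y ∈ S)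
    (hK : ContDiffOn ℝ 1 K {0}ᶜ) (hf : ContinuousOn f S) (hx : x ∉ S) :
    HasFDerivAt (layerPotential σ K f) (layerPotential σ (fderiv ℝ K) f x) x := by
  have hK' : ContinuousOn (fderiv ℝ K) {0}ᶜ :=
    hK.continuousOn_fderiv_of_isOpen isOpen_compl_singleton le_rfl
  have hSc : Sᶜ ∈ 𝓝 x := hS.isClosed.isOpen_compl.mem_nhds hx
  obtain ⟨ε, hε, hεS⟩ := nhds_basis_closedBall.mem_iff.1 hSc
  have hne {z y : E} (hz : z ∉ S) (hy : y ∈ S) : z - y ∈ ({0}ᶜ : Set E) :=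
    sub_ne_zero.2 (ne_of_mem_of_not_mem hy hz).symm
  have hcont : ContinuousOn (fun q : E × E ↦ f q.2 • fderiv ℝ K (q.1 - q.2))
      (closedBall x ε ×ˢ S) :=
    (hf.comp continuousOn_snd fun _ hq ↦ hq.2).smul <|
      hK'.comp (by fun_prop) fun _ hq ↦ hne (hεS hq.1) hq.2
  obtain ⟨C, hC⟩ := ((isCompact_closedBall x ε).prod hS).exists_bound_of_continuousOn hcont
  refine hasFDerivAt_integral_of_dominated_of_fderiv_le (closedBall_mem_nhds x hε) (F' :=
    fun z y ↦ f y • fderiv ℝ K (z - y)) (bound := fun _ ↦ C) ?_ ?_ ?_ ?_ (integrable_const _) ?_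
  · filter_upwards [hSc] with z hz
    exact (integrable_layerPotential hS hσ hK.continuousOn hf hz).aestronglyMeasurable
  · exact integrable_layerPotential hS hσ hK.continuousOn hf hx
  · exact (integrable_layerPotential hS hσ hK' hf hx).aestronglyMeasurable
  · filter_upwards [hσ] with y hy z hz using hC (z, y) ⟨hz, hy⟩
  · filter_upwards [hσ] with y hy z hz
    have hKz : HasFDerivAt K (fderiv ℝ K (z - y)) (z - y) :=
      ((hK.contDiffAt (isOpen_compl_singleton.mem_nhds
        (hne (hεS hz) hy))).differentiableAt one_ne_zero).hasFDerivAt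
    exact ((hasFDerivAt_comp_sub y).2 hKz).const_smul (f y)

lemma hasFTaylorSeriesUpToOn_layerPotential [CompleteSpace G] (hS : IsCompact S)
    (hσ : ∀ᵐ y ∂σ, y ∈ S) (hK : ContDiffOn ℝ ∞ K {0}ᶜ) (hf : ContinuousOn f S) :
    HasFTaylorSeriesUpToOn ∞ (layerPotential σ K f)
      (fun x m ↦ layerPotential σ (iteratedFDeriv ℝ m K) f x) Sᶜ := by
  have hKm := contDiffOn_iteratedFDeriv isOpen_compl_singleton hK
  have hderiv (m : ℕ) {x : E} (hx : x ∉ S) :=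
    hasFDerivAt_layerPotential hS hσ ((hKm m).of_le (by simp)) hf hx
  refine ⟨fun x hx ↦ ?_, fun m _ x hx ↦ ?_, fun m _ x hx ↦ ?_⟩
  · exact (layerPotential_clm_comp (continuousMultilinearCurryFin0 ℝ E
      G).toContinuousLinearEquiv.toContinuousLinearMap hS hσ (hKm 0).continuousOn hf hx).symm
  · refine (hderiv m hx).hasFDerivWithinAt.congr_fderiv ?_
    exact layerPotential_clm_comp (H := E →L[ℝ] E [×m]→L[ℝ] G)
      (continuousMultilinearCurryLeftEquiv ℝ (fun _ : Fin (m + 1) ↦ E)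
        G).toContinuousLinearEquiv.toContinuousLinearMap
      hS hσ (hKm (m + 1)).continuousOn hf hx
  · exact (hderiv m hx).continuousAt.continuousWithinAt

lemma contDiffOn_layerPotential [CompleteSpace G] (hS : IsCompact S) (hσ : ∀ᵐ y ∂σ, y ∈ S)
    (hK : ContDiffOn ℝ ∞ K {0}ᶜ) (hf : ContinuousOn f S) :
    ContDiffOn ℝ ∞ (layerPotential σ K f) Sᶜ :=
  (hasFTaylorSeriesUpToOn_layerPotential hS hσ hK hf).contDiffOn

lemma iteratedFDeriv_layerPotential [CompleteSpace G] (hS : IsCompact S) (hσ : ∀ᵐ y ∂σ, y ∈ S)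
    (hK : ContDiffOn ℝ ∞ K {0}ᶜ) (hf : ContinuousOn f S) (hx : x ∉ S) (m : ℕ) :
    iteratedFDeriv ℝ m (layerPotential σ K f) x =
      layerPotential σ (iteratedFDeriv ℝ m K) f x := by
  have hSc : IsOpen Sᶜ := hS.isClosed.isOpen_compl
  rw [← iteratedFDerivWithin_of_isOpen m hSc hx]
  exact ((hasFTaylorSeriesUpToOn_layerPotential hS hσ hK hf).eq_iteratedFDerivWithin_of_uniqueDiffOn
    (by exact_mod_cast le_top) hSc.uniqueDiffOn hx).symm

end LayerPotential

section Rotation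

variable {E F : Type*} [NormedAddCommGroup E] [InnerProductSpace ℝ E]
  [NormedAddCommGroup F] [NormedSpace ℝ F]

/-- The derivative of `u` along the linear vector field `x ↦ A x`. For skew-adjoint `A` this is
the infinitesimal action on functions of the rotations `exp (t A)`. -/
def derivAlong (A : E →L[ℝ] E) (u : E → F) (x : E) : F :=
  fderiv ℝ u x (A x)

variable {A : E →L[ℝ] E} {u v : E → F} {x : E}

lemma derivAlong_congr (h : u =ᶠ[𝓝 x] v) : derivAlong A u x = derivAlong A v x := by
  rw [derivAlong, derivAlong, h.fderiv_eq]

lemma contDiff_derivAlong {m n : ℕ∞ω} (hu : ContDiff ℝ n u) (hmn : m + 1 ≤ n) :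
    ContDiff ℝ m (derivAlong A u) :=
  (hu.fderiv_right hmn).clm_apply A.contDiff

lemma derivAlong_derivAlong (hu : ContDiffAt ℝ 2 u x) :
    derivAlong A (derivAlong A u) x =
      fderiv ℝ (fderiv ℝ u) x (A x) (A x) + fderiv ℝ u x (A (A x)) := by
  have hu₂ : HasFDerivAt (fderiv ℝ u) (fderiv ℝ (fderiv ℝ u) x) x :=
    ((hu.fderiv_right (m := 1) le_rfl).differentiableAt (by simp)).hasFDerivAt
  have h : HasFDerivAt (derivAlong A u) _ x := hu₂.clm_apply A.hasFDerivAt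
  rw [derivAlong, h.fderiv]
  simp [add_comm]

variable [CompleteSpace E]

lemma exists_rotation_flow (hA : A ∈ skewAdjoint (E →L[ℝ] E)) :
    ∃ ρ : ℝ → E ≃ₗᵢ[ℝ] E, (∀ x, ρ 0 x = x) ∧
      ∀ t x, HasDerivAt (fun s ↦ ρ s x) (A (ρ t x)) t := by
  let : NormedAlgebra ℚ (E →L[ℝ] E) := NormedAlgebra.restrictScalars ℚ ℝ _
  have hunitary (t : ℝ) : NormedSpace.exp (t • A) ∈ unitary (E →L[ℝ] E) :=
    NormedSpace.exp_mem_unitary_of_mem_skewAdjoint (skewAdjoint.smul_mem t hA)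
  refine ⟨fun t ↦ Unitary.linearIsometryEquiv ⟨_, hunitary t⟩, fun x ↦ ?_, fun t x ↦ ?_⟩
  · change NormedSpace.exp ((0 : ℝ) • A) x = x
    simp
  · have h := (hasDerivAt_exp_smul_const' A t).clm_apply (hasDerivAt_const t x)
    rwa [map_zero, add_zero] at h

lemma derivAlong_eq_zero_of_invariant (hA : A ∈ skewAdjoint (E →L[ℝ] E))
    (hinv : ∀ (ρ : E ≃ₗᵢ[ℝ] E) (z : E), u (ρ z) = u z) (hu : DifferentiableAt ℝ u x) :
    derivAlong A u x = 0 := by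
  obtain ⟨ρ, hρ₀, hρ⟩ := exists_rotation_flow hA
  have h : HasDerivAt (fun t ↦ u (ρ t x)) (fderiv ℝ u x (A x)) 0 := by
    refine HasFDerivAt.comp_hasDerivAt (0 : ℝ) ?_ (by simpa only [hρ₀] using hρ 0 x)
    simpa only [hρ₀] using hu.hasFDerivAt
  simp only [hinv] at h
  exact h.unique (hasDerivAt_const 0 (u x))

/- The derivative at `y` along `A y` can be replaced by one along `A x`, because `K` is constant
along the flow of `A` and `A y = A x - A (x - y)`. -/
lemma derivAlong_smul_comp_sub {K : E → F} {f : E → ℝ} {y : E}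
    (hA : A ∈ skewAdjoint (E →L[ℝ] E)) (hKinv : ∀ (ρ : E ≃ₗᵢ[ℝ] E) (z : E), K (ρ z) = K z)
    (hf : DifferentiableAt ℝ f y) (hK : DifferentiableAt ℝ K (x - y)) :
    derivAlong A (fun y ↦ f y • K (x - y)) y =
      derivAlong A f y • K (x - y) - (f y • fderiv ℝ K (x - y)) (A x) := by
  have hKsub : HasFDerivAt (fun y ↦ K (x - y)) _ y :=
    hK.hasFDerivAt.comp y ((hasFDerivAt_id y).const_sub x)
  have hKA : fderiv ℝ K (x - y) (A y) = fderiv ℝ K (x - y) (A x) := by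
    have h : fderiv ℝ K (x - y) (A (x - y)) = 0 := derivAlong_eq_zero_of_invariant hA hKinv hK
    rw [map_sub, map_sub, sub_eq_zero] at h
    exact h.symm
  have h : HasFDerivAt (fun y ↦ f y • K (x - y)) _ y := hf.hasFDerivAt.smul hKsub
  rw [derivAlong, h.fderiv]
  simp [derivAlong, hKA, neg_add_eq_sub]

variable [MeasurableSpace E]

/-- Measures carried by the sphere of radius `R` around `0` and invariant under all linear
isometries, such as its surface measure. -/
structure IsInvariantSphereMeasure (σ : Measure E) (R : ℝ) : Prop where
  measurePreserving : ∀ ρ : E ≃ₗᵢ[ℝ] E, MeasurePreserving ρ σ σ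
  ae_mem : ∀ᵐ y ∂σ, y ∈ sphere (0 : E) R

variable [BorelSpace E] [ProperSpace E] {σ : Measure E} [IsFiniteMeasure σ]
  {R : ℝ}

/- Differentiate the constant function `t ↦ ∫ u (exp (t A) y) dσ(y)` at `t = 0`. -/
lemma integral_derivAlong_eq_zero (hA : A ∈ skewAdjoint (E →L[ℝ] E))
    (hσ : IsInvariantSphereMeasure σ R)
    (hu : ∀ y ∈ sphere (0 : E) R, ContDiffAt ℝ 1 u y) :
    ∫ y, derivAlong A u y ∂σ = 0 := by
  have hS : IsCompact (sphere (0 : E) R) := isCompact_sphere 0 R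
  obtain ⟨ρ, hρ₀, hρ⟩ := exists_rotation_flow hA
  have hρS {t : ℝ} {y : E} (hy : y ∈ sphere (0 : E) R) : ρ t y ∈ sphere (0 : E) R := by
    simpa using hy
  have hu₀ : ContinuousOn u (sphere 0 R) := fun y hy ↦ (hu y hy).continuousAt.continuousWithinAt
  have hu₁ : ContinuousOn (derivAlong A u) (sphere 0 R) := fun y hy ↦
    (((hu y hy).fderiv_right (m := 0) (by simp)).continuousAt.clm_apply
      A.continuous.continuousAt).continuousWithinAt
  obtain ⟨C, hC⟩ := hS.exists_bound_of_continuousOn hu₁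
  have hderiv := (hasDerivAt_integral_of_dominated_loc_of_deriv_le (μ := σ) (s := univ)
    (x₀ := (0 : ℝ)) (F := fun t y ↦ u (ρ t y)) (F' := fun t y ↦ derivAlong A u (ρ t y))
    (bound := fun _ ↦ C) univ_mem ?_ ?_ ?_ ?_ (integrable_const C) ?_).2
  · have hconst (t : ℝ) : ∫ y, u (ρ t y) ∂σ = ∫ y, u y ∂σ :=
      (hσ.measurePreserving (ρ t)).integral_comp (ρ t).toHomeomorph.measurableEmbedding u
    simp only [hconst, hρ₀] at hderiv
    exact hderiv.unique (hasDerivAt_const _ _)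
  · exact .of_forall fun t ↦ (integrable_of_continuousOn_of_ae_mem hS hσ.ae_mem
      (hu₀.comp (ρ t).continuous.continuousOn fun y ↦ hρS)).aestronglyMeasurable
  · exact integrable_of_continuousOn_of_ae_mem hS hσ.ae_mem
      (hu₀.comp (ρ 0).continuous.continuousOn fun y ↦ hρS)
  · exact (integrable_of_continuousOn_of_ae_mem hS hσ.ae_mem
      (hu₁.comp (ρ 0).continuous.continuousOn fun y ↦ hρS)).aestronglyMeasurable
  · filter_upwards [hσ.ae_mem] with y hy t _ using hC _ (hρS hy)
  · filter_upwards [hσ.ae_mem] with y hy t _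
    exact ((hu _ (hρS hy)).differentiableAt (by simp)).hasFDerivAt.comp_hasDerivAt t (hρ t y)

lemma derivAlong_layerPotential {K : E → F} {f : E → ℝ} (hA : A ∈ skewAdjoint (E →L[ℝ] E))
    (hσ : IsInvariantSphereMeasure σ R) (hK : ContDiffOn ℝ 1 K {0}ᶜ)
    (hKinv : ∀ (ρ : E ≃ₗᵢ[ℝ] E) (z : E), K (ρ z) = K z) (hf : ContDiff ℝ 1 f)
    (hx : x ∉ sphere (0 : E) R) :
    derivAlong A (layerPotential σ K f) x = layerPotential σ K (derivAlong A f) x := by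
  have hS : IsCompact (sphere (0 : E) R) := isCompact_sphere 0 R
  have hKat (y : E) (hy : y ∈ sphere (0 : E) R) : ContDiffAt ℝ 1 K (x - y) :=
    hK.contDiffAt (isOpen_compl_singleton.mem_nhds
      (sub_ne_zero.2 (ne_of_mem_of_not_mem hy hx).symm))
  have hK' : ContinuousOn (fderiv ℝ K) {0}ᶜ :=
    hK.continuousOn_fderiv_of_isOpen isOpen_compl_singleton le_rfl
  have hint := integrable_layerPotential hS hσ.ae_mem hK' hf.continuous.continuousOn hx
  have hleibniz (y : E) (hy : y ∈ sphere (0 : E) R) :=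
    derivAlong_smul_comp_sub hA hKinv (hf.differentiable (by simp) y)
      ((hKat y hy).differentiableAt (by simp))
  have hzero : ∫ y, derivAlong A (fun y ↦ f y • K (x - y)) y ∂σ = 0 :=
    integral_derivAlong_eq_zero hA hσ fun y hy ↦
      hf.contDiffAt.smul ((hKat y hy).comp y (contDiffAt_const.sub contDiffAt_id))
  rw [integral_congr_ae (hσ.ae_mem.mono hleibniz), integral_sub, sub_eq_zero,
    ← ContinuousLinearMap.integral_apply hint] at hzero
  · have hfderiv := hasFDerivAt_layerPotential hS hσ.ae_mem hK hf.continuous.continuousOn hx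
    rw [derivAlong, hfderiv.fderiv]
    exact hzero.symm
  · exact integrable_layerPotential hS hσ.ae_mem hK.continuousOn
      (contDiff_derivAlong (m := 0) hf (by simp)).continuous.continuousOn hx
  · exact hint.apply_continuousLinearMap _

end Rotation

section AngularLaplacian

variable {ι E F : Type*} [Fintype ι] [NormedAddCommGroup E] [InnerProductSpace ℝ E]
  [NormedAddCommGroup F] [NormedSpace ℝ F]

/-- The infinitesimal rotation in the plane of `v` and `w`, in the direction from `v` to `w`;
it generates a rotation group when `v` and `w` are orthonormal. -/
def planeRotation (v w : E) : E →L[ℝ] E :=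
  rankOne ℝ w v - rankOne ℝ v w

lemma planeRotation_apply (v w x : E) :
    planeRotation v w x = inner ℝ v x • w - inner ℝ w x • v := rfl

lemma planeRotation_mem_skewAdjoint [CompleteSpace E] (v w : E) :
    planeRotation v w ∈ skewAdjoint (E →L[ℝ] E) := by
  rw [skewAdjoint.mem_iff, planeRotation, ContinuousLinearMap.star_eq_adjoint]
  simp

lemma sum_planeRotation_planeRotation (e : OrthonormalBasis ι ℝ E) (x : E) :
    ∑ i, ∑ j, planeRotation (e i) (e j) (planeRotation (e i) (e j) x) =
      -((2 * (Fintype.card ι - 1) : ℝ) • x) := by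
  classical
  have hterm (i j : ι) : planeRotation (e i) (e j) (planeRotation (e i) (e j) x) =
      (if i = j then (2 : ℝ) • inner ℝ (e i) x • e i else 0) -
        inner ℝ (e i) x • e i - inner ℝ (e j) x • e j := by
    rcases eq_or_ne i j with rfl | hij
    · simp [planeRotation_apply, two_smul]
    · simp [planeRotation_apply, inner_sub_right, inner_smul_right, e.inner_eq_ite, hij, hij.symm]
      abel
  simp only [hterm, Finset.sum_sub_distrib, Finset.sum_ite_eq, Finset.mem_univ, if_true,
    Finset.sum_const, Finset.card_univ, ← Finset.smul_sum, e.sum_repr']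
  module

lemma sum_apply_planeRotation (e : OrthonormalBasis ι ℝ E) (B : E →L[ℝ] E →L[ℝ] F) (x : E) :
    ∑ i, ∑ j, B (planeRotation (e i) (e j) x) (planeRotation (e i) (e j) x) =
      (2 : ℝ) • (‖x‖ ^ 2 • ∑ i, B (e i) (e i) - B x x) := by
  set c : ι → ℝ := fun i ↦ inner ℝ (e i) x
  have hterm (i j : ι) : B (planeRotation (e i) (e j) x) (planeRotation (e i) (e j) x) =
      c i ^ 2 • B (e j) (e j) - B (c j • e j) (c i • e i) - B (c i • e i) (c j • e j) +
        c j ^ 2 • B (e i) (e i) := by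
    simp only [planeRotation_apply, map_sub, map_smul, _root_.sub_apply, _root_.smul_apply, c]
    module
  have hx : ∑ i, c i • e i = x := e.sum_repr' x
  have hnorm : ∑ i, c i ^ 2 = ‖x‖ ^ 2 := by simpa [c] using e.sum_sq_norm_inner_right x
  have hB : ∑ i, ∑ j, B (c i • e i) (c j • e j) = B x x := by
    simp only [← map_sum, hx, ← _root_.sum_apply]
  have htrace : ∑ i, ∑ j, c i ^ 2 • B (e j) (e j) = ‖x‖ ^ 2 • ∑ i, B (e i) (e i) := by
    rw [← Finset.sum_smul_sum, hnorm]
  simp only [hterm, Finset.sum_sub_distrib, Finset.sum_add_distrib, hB, htrace]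
  rw [Finset.sum_comm, hB, Finset.sum_comm (f := fun i j ↦ c j ^ 2 • B (e i) (e i)), htrace]
  module

variable [FiniteDimensional ℝ E]

/-- The Laplacian along spheres centred at `0`, written as the Casimir operator of the rotation
group. Each coordinate plane occurs twice in the sum, whence the factor `1 / 2`. -/
def angularLaplacian (u : E → F) (x : E) : F :=
  (2⁻¹ : ℝ) • ∑ i, ∑ j,
    derivAlong (planeRotation (stdOrthonormalBasis ℝ E i) (stdOrthonormalBasis ℝ E j))
      (derivAlong (planeRotation (stdOrthonormalBasis ℝ E i) (stdOrthonormalBasis ℝ E j)) u) x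

variable {u : E → F} {x : E}

lemma angularLaplacian_eq {a b : ℝ} (hab : a + b = Module.finrank ℝ E - 2)
    (hu : ContDiffAt ℝ 2 u x) :
    angularLaplacian u x = ‖x‖ ^ 2 • Δ u x - eulerShift a (eulerShift b u) x + (a * b) • u x := by
  have hΔ : Δ u x = ∑ i, fderiv ℝ (fderiv ℝ u) x
      (stdOrthonormalBasis ℝ E i) (stdOrthonormalBasis ℝ E i) := by
    simp [laplacian_eq_iteratedFDeriv_stdOrthonormalBasis, iteratedFDeriv_two_apply]
  simp only [angularLaplacian, derivAlong_derivAlong hu, Finset.sum_add_distrib, ← map_sum,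
    sum_apply_planeRotation, sum_planeRotation_planeRotation, ← hΔ, eulerShift_eulerShift hu,
    hab, map_neg, map_smul, Fintype.card_fin]
  module

lemma angularLaplacian_eq_zero_of_invariant (hinv : ∀ (ρ : E ≃ₗᵢ[ℝ] E) (z : E), u (ρ z) = u z)
    (hu : ContDiffAt ℝ 1 u x) : angularLaplacian u x = 0 := by
  have hzero (v w : E) : derivAlong (planeRotation v w) u =ᶠ[𝓝 x] 0 := by
    filter_upwards [hu.eventually (by simp)] with z hz
    exact derivAlong_eq_zero_of_invariant (planeRotation_mem_skewAdjoint v w) hinv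
      (hz.differentiableAt (by simp))
  simp only [angularLaplacian, derivAlong_congr (hzero _ _)]
  simp [derivAlong]

/- Both the angular and the Euler part of `‖x‖ ^ 2 • Δ` vanish. -/
lemma laplacian_eq_zero_of_invariant_of_eulerShift
    (hinv : ∀ (ρ : E ≃ₗᵢ[ℝ] E) (z : E), u (ρ z) = u z) (hu : ContDiffAt ℝ 2 u x)
    (heuler : eulerShift (Module.finrank ℝ E - 2) u =ᶠ[𝓝 x] 0) (hx : x ≠ 0) :
    Δ u x = 0 := by
  have h := angularLaplacian_eq (a := 0) (zero_add _) hu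
  rw [angularLaplacian_eq_zero_of_invariant hinv (hu.of_le one_le_two), eulerShift,
    heuler.fderiv_eq, heuler.eq_of_nhds] at h
  simpa [hx] using h.symm

end AngularLaplacian

section Laplacian

variable {E F : Type*} [NormedAddCommGroup E] [InnerProductSpace ℝ E] [FiniteDimensional ℝ E]
  [NormedAddCommGroup F] [NormedSpace ℝ F]

variable (E F) in
/-- The trace of a bilinear map, as a continuous linear functional on bilinear maps; applied to
the second derivative it gives the Laplacian. -/
def traceCLM : (E [×2]→L[ℝ] F) →L[ℝ] F :=
  ∑ i, ContinuousMultilinearMap.apply ℝ (fun _ : Fin 2 ↦ E) F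
    ![stdOrthonormalBasis ℝ E i, stdOrthonormalBasis ℝ E i]

lemma laplacian_eq_traceCLM_comp (u : E → F) : Δ u = traceCLM E F ∘ iteratedFDeriv ℝ 2 u := by
  ext x
  simp [traceCLM, laplacian_eq_iteratedFDeriv_stdOrthonormalBasis]

lemma contDiff_laplacian {m n : ℕ∞ω} {u : E → F} (hu : ContDiff ℝ n u) (hmn : m + 2 ≤ n) :
    ContDiff ℝ m (Δ u) := by
  rw [laplacian_eq_traceCLM_comp]
  exact (traceCLM E F).contDiff.comp (hu.iteratedFDeriv_right hmn)

lemma laplacian_eulerShift {a : ℝ} {u : E → F} {x : E} (hu : ContDiffAt ℝ 3 u x) :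
    Δ (eulerShift a u) x = eulerShift (a + 2) (Δ u) x := by
  rw [laplacian_eq_traceCLM_comp, laplacian_eq_traceCLM_comp, eulerShift_clm_comp,
    Function.comp_apply, iteratedFDeriv_eulerShift, Nat.cast_ofNat]
  · exact hu.of_le (by norm_num)
  · exact (hu.iteratedFDeriv_right (m := 1) (by norm_num)).differentiableAt (by simp)

lemma laplacian_eq_zero_of_eulerShift_eq_zero {d : ℝ} (hd : d < 2) {f : E → F} (hf : ContDiff ℝ 3 f)
    (hfd : eulerShift (-d) f = 0) : Δ f = 0 := by
  ext x
  refine eq_zero_of_eulerShift_eq_zero (starConvex_univ 0) (a := -d + 2) (by linarith)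
    (fun y _ ↦ ?_) (fun y _ ↦ ?_) (mem_univ x)
  · exact (contDiff_laplacian (m := 1) hf (by norm_num)).differentiable (by simp) y
  · rw [← laplacian_eulerShift hf.contDiffAt, hfd]
    exact congrFun laplacian_const y

lemma laplacian_layerPotential_eq_zero [CompleteSpace F] [MeasurableSpace E] [BorelSpace E]
    {σ : Measure E} [IsFiniteMeasure σ] {S : Set E} {K : E → F} {f : E → ℝ} {x : E}
    (hS : IsCompact S) (hσ : ∀ᵐ y ∂σ, y ∈ S) (hK : ContDiffOn ℝ ∞ K {0}ᶜ)
    (hKΔ : EqOn (Δ K) 0 {0}ᶜ) (hf : ContinuousOn f S) (hx : x ∉ S) :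
    Δ (layerPotential σ K f) x = 0 := by
  rw [laplacian_eq_traceCLM_comp, Function.comp_apply,
    iteratedFDeriv_layerPotential hS hσ hK hf hx, ← layerPotential_clm_comp _ hS hσ
      (contDiffOn_iteratedFDeriv isOpen_compl_singleton hK 2).continuousOn hf hx,
    ← laplacian_eq_traceCLM_comp, layerPotential_congr hσ hKΔ (eqOn_refl f S) hx]
  simp [layerPotential]

/-- Kernels that are smooth, radial and harmonic off the origin, such as the fundamental solution
of the Laplacian. -/
structure IsRadialHarmonicKernel (K : E → F) : Prop where
  contDiffOn : ContDiffOn ℝ ∞ K {0}ᶜ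
  isometry_apply : ∀ (ρ : E ≃ₗᵢ[ℝ] E) (z : E), K (ρ z) = K z
  laplacian_eqOn : EqOn (Δ K) 0 {0}ᶜ

end Laplacian

section SphericalLayerPotential

variable {E F : Type*} [NormedAddCommGroup E] [InnerProductSpace ℝ E] [FiniteDimensional ℝ E]
  [MeasurableSpace E] [BorelSpace E] [NormedAddCommGroup F] [NormedSpace ℝ F]
  {σ : Measure E} [IsFiniteMeasure σ] {R : ℝ} {K : E → F} {f : E → ℝ} {x : E}

lemma angularLaplacian_layerPotential (hσ : IsInvariantSphereMeasure σ R)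
    (hK : ContDiffOn ℝ 1 K {0}ᶜ) (hKinv : ∀ (ρ : E ≃ₗᵢ[ℝ] E) (z : E), K (ρ z) = K z)
    (hf : ContDiff ℝ 2 f) (hx : x ∉ sphere (0 : E) R) :
    angularLaplacian (layerPotential σ K f) x = layerPotential σ K (angularLaplacian f) x := by
  have hS : IsCompact (sphere (0 : E) R) := isCompact_sphere 0 R
  have htwice (v w : E) : derivAlong (planeRotation v w) (derivAlong (planeRotation v w)
      (layerPotential σ K f)) x = layerPotential σ K
        (derivAlong (planeRotation v w) (derivAlong (planeRotation v w) f)) x := by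
    have hA := planeRotation_mem_skewAdjoint v w
    rw [← derivAlong_layerPotential hA hσ hK hKinv (contDiff_derivAlong hf le_rfl) hx]
    refine derivAlong_congr ?_
    filter_upwards [hS.isClosed.isOpen_compl.mem_nhds hx] with z hz
    exact derivAlong_layerPotential hA hσ hK hKinv (hf.of_le one_le_two) hz
  have hcont (v w : E) : ContinuousOn
      (derivAlong (planeRotation v w) (derivAlong (planeRotation v w) f)) (sphere 0 R) :=
    (contDiff_derivAlong (m := 0) (contDiff_derivAlong (m := 1) hf le_rfl)
      (by simp)).continuous.continuousOn
  unfold angularLaplacian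
  simp only [htwice, smul_eq_mul, layerPotential_const_mul]
  rw [layerPotential_sum hS hσ.ae_mem hK.continuousOn
    (fun _ _ ↦ continuousOn_finsetSum _ fun _ _ ↦ hcont _ _) hx]
  congr! 2 with i
  exact (layerPotential_sum hS hσ.ae_mem hK.continuousOn (fun _ _ ↦ hcont _ _) hx).symm

variable [CompleteSpace F]

lemma eulerShift_eulerShift_layerPotential {d : ℝ}
    (hσ : IsInvariantSphereMeasure σ R) (hK : IsRadialHarmonicKernel K)
    (hf : ContDiff ℝ 2 f) (hfd : eulerShift (-d) f = 0) (hx : x ∉ sphere (0 : E) R) :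
    eulerShift (-d) (eulerShift (d + Module.finrank ℝ E - 2) (layerPotential σ K f)) x =
      (-R ^ 2) • layerPotential σ K (Δ f) x := by
  have hS : IsCompact (sphere (0 : E) R) := isCompact_sphere 0 R
  set b : ℝ := d + Module.finrank ℝ E - 2 with hb
  have hΔf : Continuous (Δ f) := (contDiff_laplacian (m := 0) hf (by simp)).continuous
  have hangular_density : EqOn (angularLaplacian f)
      (fun y ↦ R ^ 2 * Δ f y - b * d * f y) (sphere (0 : E) R) := by
    intro y hy
    have hshift : eulerShift b (0 : E → ℝ) y = 0 := by simp [eulerShift]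
    rw [angularLaplacian_eq (a := b) (b := -d) (by rw [hb]; ring) hf.contDiffAt, hfd, hshift,
      mem_sphere_zero_iff_norm.1 hy]
    simp [sub_eq_add_neg]
  have hangular_potential := angularLaplacian_eq (a := -d) (b := b) (by rw [hb]; ring)
    (((contDiffOn_layerPotential hS hσ.ae_mem hK.contDiffOn hf.continuous.continuousOn).contDiffAt
      (hS.isClosed.isOpen_compl.mem_nhds hx)).of_le (m := 2) ENat.LEInfty.out)
  rw [laplacian_layerPotential_eq_zero hS hσ.ae_mem hK.contDiffOn hK.laplacian_eqOn
      hf.continuous.continuousOn hx,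
    angularLaplacian_layerPotential hσ (hK.contDiffOn.of_le (by simp)) hK.isometry_apply hf hx,
    layerPotential_congr hσ.ae_mem (eqOn_refl K _) hangular_density hx,
    layerPotential_sub hS hσ.ae_mem hK.contDiffOn.continuousOn (hΔf.const_mul _).continuousOn
      (hf.continuous.const_mul _).continuousOn hx,
    layerPotential_const_mul, layerPotential_const_mul] at hangular_potential
  rw [← sub_eq_zero, ← sub_eq_zero.2 hangular_potential]
  module

/- For `d < m` the two Euler shifts of `D ^ m u`, namely `m - d` and `m + d + n - 2`, are
positive. -/
lemma iteratedFDeriv_layerPotential_eq_zero_of_laplacian {d m : ℕ}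
    (hn : 2 ≤ Module.finrank ℝ E)
    (hσ : IsInvariantSphereMeasure σ R) (hK : IsRadialHarmonicKernel K)
    (hf : ContDiff ℝ ∞ f) (hfd : eulerShift (-d) f = 0) (hdm : d < m)
    (hΔ : ∀ y ∈ ball (0 : E) R, iteratedFDeriv ℝ m (layerPotential σ K (Δ f)) y = 0)
    (hx : x ∈ ball (0 : E) R) : iteratedFDeriv ℝ m (layerPotential σ K f) x = 0 := by
  have hS : IsCompact (sphere (0 : E) R) := isCompact_sphere 0 R
  have hball {y : E} (hy : y ∈ ball (0 : E) R) : y ∉ sphere (0 : E) R :=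
    fun hy' ↦ sphere_disjoint_ball.le_bot ⟨hy', hy⟩
  have hstar : StarConvex ℝ 0 (ball (0 : E) R) :=
    (convex_ball 0 R).starConvex (mem_ball_self (pos_of_mem_ball hx))
  have hpot {g : E → ℝ} (hg : Continuous g) : ContDiffOn ℝ ∞ (layerPotential σ K g) (ball 0 R) :=
    (contDiffOn_layerPotential hS hσ.ae_mem hK.contDiffOn hg.continuousOn).mono fun _ ↦ hball
  have hn' : (2 : ℝ) ≤ Module.finrank ℝ E := by exact_mod_cast hn
  have hdm' : (d : ℝ) < m := by exact_mod_cast hdm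
  have hpde : EqOn
      (eulerShift (-d) (eulerShift (d + Module.finrank ℝ E - 2) (layerPotential σ K f)))
      ((-R ^ 2) • layerPotential σ K (Δ f)) (ball 0 R) := fun y hy ↦
    eulerShift_eulerShift_layerPotential hσ hK (hf.of_le ENat.LEInfty.out) hfd
      (hball hy)
  refine iteratedFDeriv_eq_zero_of_eulerShift isOpen_ball hstar (a := d + Module.finrank ℝ E - 2)
    (by linarith) (hpot hf.continuous) (fun y hy ↦ ?_) hx
  refine iteratedFDeriv_eq_zero_of_eulerShift isOpen_ball hstar (a := -d) (by linarith)
    (contDiffOn_eulerShift isOpen_ball (hpot hf.continuous)) (fun z hz ↦ ?_) hy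
  have hΔf : Continuous (Δ f) := (contDiff_laplacian (m := ∞) hf le_rfl).continuous
  rw [((hpde.eventuallyEq_of_mem (isOpen_ball.mem_nhds hz)).iteratedFDeriv ℝ m).eq_of_nhds,
    iteratedFDeriv_const_smul_apply
      (((hpot hΔf).contDiffAt (isOpen_ball.mem_nhds hz)).of_le ENat.LEInfty.out),
    hΔ z hz, smul_zero]

theorem iteratedFDeriv_layerPotential_eq_zero {d m : ℕ} (hn : 2 ≤ Module.finrank ℝ E)
    (hσ : IsInvariantSphereMeasure σ R) (hK : IsRadialHarmonicKernel K)
    (hf : ContDiff ℝ ∞ f) (hfd : eulerShift (-d) f = 0) (hdm : d < m) (hx : x ∈ ball (0 : E) R) :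
    iteratedFDeriv ℝ m (layerPotential σ K f) x = 0 := by
  induction d using Nat.strong_induction_on generalizing f x with
  | _ d ih =>
    refine iteratedFDeriv_layerPotential_eq_zero_of_laplacian hn hσ hK hf hfd hdm
      (fun y hy ↦ ?_) hx
    rcases lt_or_ge d 2 with hd | hd
    · rw [laplacian_eq_zero_of_eulerShift_eq_zero (by exact_mod_cast hd)
        (hf.of_le ENat.LEInfty.out) hfd]
      have hzero : layerPotential σ K (0 : E → ℝ) = 0 := by
        ext
        simp [layerPotential]
      rw [hzero, iteratedFDeriv_zero, Pi.zero_apply]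
    · refine ih (d - 2) (by omega) (contDiff_laplacian hf le_rfl) ?_ (by omega) hy
      ext z
      rw [Nat.cast_sub hd, neg_sub, sub_eq_neg_add, Nat.cast_ofNat,
        ← laplacian_eulerShift (hf.contDiffAt.of_le ENat.LEInfty.out), hfd]
      exact congrFun laplacian_const z

end SphericalLayerPotential

section SphereMeasure

variable {E : Type*} [NormedAddCommGroup E] [InnerProductSpace ℝ E] {x : E}

lemma image_stereoInvFunAux_mem_nhdsWithin_sphere (hx : ‖x‖ = 1) {U : Set (ℝ ∙ (-x))ᗮ}
    (hU : U ∈ 𝓝 0) :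
    (fun w : (ℝ ∙ (-x))ᗮ ↦ stereoInvFunAux (-x) (w : E)) '' U ∈ 𝓝[sphere (0 : E) 1] x := by
  have hinner : innerSL ℝ (-x) x ≠ 1 := by
    simp only [innerSL_apply_apply, inner_neg_left, real_inner_self_eq_norm_sq, hx]
    norm_num
  have hcont : ContinuousAt (stereoToFun (-x)) x := continuousOn_stereoToFun.continuousAt
    ((isOpen_ne_fun (by fun_prop) continuous_const).mem_nhds hinner)
  have hzero : stereoToFun (-x) x = 0 := by
    rw [stereoToFun_apply, (Submodule.orthogonalProjectionOnto_eq_zero_iff (𝕜 := ℝ)).2, smul_zero]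
    rw [Submodule.orthogonal_orthogonal]
    exact neg_mem_iff.1 (Submodule.mem_span_singleton_self (-x))
  have hpole : x ≠ -x := by
    intro h
    simp [← h, hx] at hinner
  filter_upwards [mem_nhdsWithin_of_mem_nhds (hcont.preimage_mem_nhds (hzero ▸ hU)),
    mem_nhdsWithin_of_mem_nhds (isOpen_ne.mem_nhds hpole), self_mem_nhdsWithin] with y hyU hy hyS
  exact ⟨_, hyU, congrArg Subtype.val
    (stereo_left_inv ((norm_neg x).trans hx) (x := ⟨y, hyS⟩) hy)⟩

variable [MeasurableSpace E] [BorelSpace E]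

lemma isInvariantSphereMeasure_hausdorffMeasure (s R : ℝ) :
    IsInvariantSphereMeasure (μH[s].restrict (sphere (0 : E) R)) R where
  measurePreserving ρ := by
    simpa using (ρ.toIsometryEquiv.measurePreserving_hausdorffMeasure s).restrict_preimage
      (isClosed_sphere (x := (0 : E)) (ε := R)).measurableSet
  ae_mem := ae_restrict_mem isClosed_sphere.measurableSet

variable [FiniteDimensional ℝ E]

lemma exists_nhdsWithin_sphere_hausdorffMeasure_lt_top (hx : ‖x‖ = 1) :
    ∃ T ∈ 𝓝[sphere (0 : E) 1] x, μH[(Module.finrank ℝ E : ℝ) - 1] T < ⊤ := by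
  have hx₀ : -x ≠ 0 := neg_ne_zero.2 (norm_ne_zero_iff.1 (hx.trans_ne one_ne_zero))
  have hdim : (Module.finrank ℝ E : ℝ) - 1 = Module.finrank ℝ (ℝ ∙ (-x))ᗮ := by
    rw [← (ℝ ∙ (-x)).finrank_add_finrank_orthogonal, finrank_span_singleton hx₀, Nat.cast_add,
      Nat.cast_one, add_sub_cancel_left]
  obtain ⟨C, hC⟩ : ∃ C, LipschitzOnWith C (fun w : (ℝ ∙ (-x))ᗮ ↦ stereoInvFunAux (-x) (w : E))
      (closedBall 0 1) :=
    (contDiff_stereoInvFunAux.comp (ℝ ∙ (-x))ᗮ.subtypeL.contDiff).contDiffOn.exists_lipschitzOnWith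
      one_ne_zero (convex_closedBall 0 1) (isCompact_closedBall 0 1)
  refine ⟨_, image_stereoInvFunAux_mem_nhdsWithin_sphere hx (closedBall_mem_nhds 0 one_pos), ?_⟩
  rw [hdim]
  refine (hC.hausdorffMeasure_image_le (Nat.cast_nonneg _)).trans_lt (ENNReal.mul_lt_top ?_ ?_)
  · exact ENNReal.rpow_lt_top_of_nonneg (Nat.cast_nonneg _) ENNReal.coe_ne_top
  · exact (isCompact_closedBall 0 1).measure_lt_top

open scoped Pointwise in
lemma hausdorffMeasure_sphere_lt_top {R : ℝ} (hR : 0 < R) :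
    μH[(Module.finrank ℝ E : ℝ) - 1] (sphere (0 : E) R) < ⊤ := by
  have hunit : μH[(Module.finrank ℝ E : ℝ) - 1] (sphere (0 : E) 1) < ⊤ :=
    (isCompact_sphere 0 1).measure_lt_top_of_nhdsWithin fun _ hx ↦
      exists_nhdsWithin_sphere_hausdorffMeasure_lt_top (mem_sphere_zero_iff_norm.1 hx)
  rcases subsingleton_or_nontrivial E with _ | _
  · simp [sphere_eq_empty_of_subsingleton hR.ne']
  · have hdim : (0 : ℝ) ≤ Module.finrank ℝ E - 1 :=
      sub_nonneg.2 (by exact_mod_cast Module.finrank_pos (R := ℝ) (M := E))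
    have hsphere : sphere (0 : E) R = R • sphere (0 : E) 1 := by
      rw [smul_sphere' hR.ne', smul_zero, mul_one, Real.norm_of_nonneg hR.le]
    rw [hsphere, Measure.hausdorffMeasure_smul₀ hdim hR.ne']
    exact ENNReal.mul_lt_top ENNReal.coe_lt_top hunit

end SphereMeasure

section Polynomial

variable {ι : Type*}

lemma eval_smul_of_isHomogeneous [Finite ι] {R : Type*} [CommSemiring R]
    {p : MvPolynomial ι R} {d : ℕ} (hp : p.IsHomogeneous d) (t : R) (y : ι → R) :
    MvPolynomial.eval (t • y) p = t ^ d • MvPolynomial.eval y p := by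
  have := Fintype.ofFinite ι
  rw [MvPolynomial.eval_eq', MvPolynomial.eval_eq', Finset.smul_sum]
  refine Finset.sum_congr rfl fun c hc ↦ ?_
  have hdeg : ∑ i, c i = d := by
    simpa [Finsupp.weight_apply, Finsupp.sum_fintype] using hp (MvPolynomial.mem_support_iff.1 hc)
  simp only [Pi.smul_apply, smul_eq_mul, mul_pow, Finset.prod_mul_distrib,
    Finset.prod_pow_eq_pow_sum, hdeg]
  ring

variable [Fintype ι]

lemma contDiff_eval_mvPolynomial (p : MvPolynomial ι ℝ) :
    ContDiff ℝ ∞ fun y : EuclideanSpace ℝ ι ↦ MvPolynomial.eval (fun i ↦ y i) p :=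
  (AnalyticOnNhd.eval_mvPolynomial p).contDiff.comp (EuclideanSpace.equiv ι ℝ).contDiff

lemma eulerShift_eval_mvPolynomial {p : MvPolynomial ι ℝ} {d : ℕ} (hp : p.IsHomogeneous d) :
    eulerShift (-d) (fun y : EuclideanSpace ℝ ι ↦ MvPolynomial.eval (fun i ↦ y i) p) = 0 := by
  ext y
  refine eulerShift_neg_eq_zero
    ((contDiff_eval_mvPolynomial p).contDiffAt.differentiableAt (by simp)) fun t _ ↦ ?_
  rw [Real.rpow_natCast]
  exact eval_smul_of_isHomogeneous hp t _

theorem iteratedFDeriv_layerPotential_eval_eq_zero {F : Type*} [NormedAddCommGroup F]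
    [NormedSpace ℝ F] [CompleteSpace F] {σ : Measure (EuclideanSpace ℝ ι)} [IsFiniteMeasure σ]
    {R : ℝ} {K : EuclideanSpace ℝ ι → F} {p : MvPolynomial ι ℝ} {m : ℕ} {x : EuclideanSpace ℝ ι}
    (hι : 2 ≤ Fintype.card ι) (hσ : IsInvariantSphereMeasure σ R) (hK : IsRadialHarmonicKernel K)
    (hp : p.totalDegree < m) (hx : x ∈ ball (0 : EuclideanSpace ℝ ι) R) :
    iteratedFDeriv ℝ m (layerPotential σ K fun y ↦ MvPolynomial.eval (fun i ↦ y i) p) x = 0 := by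
  have hS : IsCompact (sphere (0 : EuclideanSpace ℝ ι) R) := isCompact_sphere 0 R
  have hxS : x ∉ sphere (0 : EuclideanSpace ℝ ι) R := fun h ↦ sphere_disjoint_ball.le_bot ⟨h, hx⟩
  have hcont (q : MvPolynomial ι ℝ) : ContinuousOn
      (fun y : EuclideanSpace ℝ ι ↦ MvPolynomial.eval (fun i ↦ y i) q) (sphere 0 R) :=
    (contDiff_eval_mvPolynomial q).continuous.continuousOn
  have hcomponent (d : ℕ) (hd : d < m) : iteratedFDeriv ℝ m (layerPotential σ K fun y ↦
      MvPolynomial.eval (fun i ↦ y i) (MvPolynomial.homogeneousComponent d p)) x = 0 :=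
    iteratedFDeriv_layerPotential_eq_zero (by simpa) hσ hK (contDiff_eval_mvPolynomial _)
      (eulerShift_eval_mvPolynomial (MvPolynomial.homogeneousComponent_isHomogeneous d p)) hd hx
  simp only [iteratedFDeriv_layerPotential hS hσ.ae_mem hK.contDiffOn (hcont _) hxS]
    at hcomponent ⊢
  conv_lhs => rw [← MvPolynomial.sum_homogeneousComponent p]
  simp only [map_sum]
  rw [layerPotential_sum hS hσ.ae_mem
    (contDiffOn_iteratedFDeriv isOpen_compl_singleton hK.contDiffOn m).continuousOn
    (fun d _ ↦ hcont _) hxS]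
  exact Finset.sum_eq_zero fun d hd ↦
    hcomponent d ((Finset.mem_range_succ_iff.1 hd).trans_lt hp)

end Polynomial

section FundSol

variable {n : ℕ}

lemma contDiffAt_fundSol {z : EuclideanSpace ℝ (Fin n)} (hz : z ≠ 0) :
    ContDiffAt ℝ ∞ (fundSol n) z :=
  contDiffAt_const.mul ((contDiffAt_norm ℝ hz).rpow_const_of_ne (norm_ne_zero_iff.2 hz))

lemma eulerShift_fundSol {z : EuclideanSpace ℝ (Fin n)} (hz : z ≠ 0) :
    eulerShift (n - 2) (fundSol n) z = 0 := by
  rw [← neg_sub]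
  refine eulerShift_neg_eq_zero ((contDiffAt_fundSol hz).differentiableAt (by simp)) fun t ht ↦ ?_
  rw [fundSol, fundSol, norm_smul, Real.norm_of_nonneg ht.le,
    Real.mul_rpow ht.le (norm_nonneg z), smul_eq_mul, mul_left_comm]

lemma isRadialHarmonicKernel_fundSol : IsRadialHarmonicKernel (fundSol n) where
  contDiffOn z hz := (contDiffAt_fundSol hz).contDiffWithinAt
  isometry_apply ρ z := by rw [fundSol, fundSol, ρ.norm_map]
  laplacian_eqOn z hz := by
    refine laplacian_eq_zero_of_invariant_of_eulerShift
      (fun ρ z ↦ by rw [fundSol, fundSol, ρ.norm_map])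
      ((contDiffAt_fundSol hz).of_le ENat.LEInfty.out) ?_ hz
    filter_upwards [isOpen_ne.mem_nhds hz] with y hy
    rw [finrank_euclideanSpace_fin]
    exact eulerShift_fundSol hy

end FundSol

theorem stmt_1_general {n m : ℕ} {K : EuclideanSpace ℝ (Fin n) → ℝ} (hn : 2 ≤ n)
    (hK : IsRadialHarmonicKernel K) {R : ℝ} (v : Fin m → EuclideanSpace ℝ (Fin n))
    {p : MvPolynomial (Fin n) ℝ} (hp : p.totalDegree < m)
    {x : EuclideanSpace ℝ (Fin n)} (hx : ‖x‖ < R) :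
    ∫ y in sphere (0 : EuclideanSpace ℝ (Fin n)) R,
      iteratedFDeriv ℝ m (fun z ↦ K (z - y)) x v * MvPolynomial.eval (fun i ↦ y i) p
      ∂μH[(n : ℝ) - 1] = 0 := by
  set σ : Measure (EuclideanSpace ℝ (Fin n)) := μH[(n : ℝ) - 1].restrict (sphere 0 R)
  have hR : 0 < R := (norm_nonneg x).trans_lt hx
  have hball : x ∈ ball (0 : EuclideanSpace ℝ (Fin n)) R := mem_ball_zero_iff.2 hx
  have hxS : x ∉ sphere (0 : EuclideanSpace ℝ (Fin n)) R := fun h ↦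
    sphere_disjoint_ball.le_bot ⟨h, hball⟩
  have hS : IsCompact (sphere (0 : EuclideanSpace ℝ (Fin n)) R) := isCompact_sphere 0 R
  have hσ : IsInvariantSphereMeasure σ R := isInvariantSphereMeasure_hausdorffMeasure _ R
  have : IsFiniteMeasure σ := by
    have h := hausdorffMeasure_sphere_lt_top (E := EuclideanSpace ℝ (Fin n)) hR
    rw [finrank_euclideanSpace_fin] at h
    exact isFiniteMeasure_restrict.2 h.ne
  have hKm : ContinuousOn (iteratedFDeriv ℝ m K) {0}ᶜ :=
    (contDiffOn_iteratedFDeriv isOpen_compl_singleton hK.contDiffOn m).continuousOn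
  have hp' : ContinuousOn (fun y : EuclideanSpace ℝ (Fin n) ↦ MvPolynomial.eval (fun i ↦ y i) p)
      (sphere 0 R) := (contDiff_eval_mvPolynomial p).continuous.continuousOn
  let L := ContinuousMultilinearMap.apply ℝ (fun _ : Fin m ↦ EuclideanSpace ℝ (Fin n)) ℝ v
  calc ∫ y, iteratedFDeriv ℝ m (fun z ↦ K (z - y)) x v * MvPolynomial.eval (fun i ↦ y i) p ∂σ
      = layerPotential σ (L ∘ iteratedFDeriv ℝ m K)
          (fun y ↦ MvPolynomial.eval (fun i ↦ y i) p) x := by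
        simp only [iteratedFDeriv_comp_sub, mul_comm]
        rfl
    _ = L (iteratedFDeriv ℝ m
          (layerPotential σ K fun y ↦ MvPolynomial.eval (fun i ↦ y i) p) x) := by
        rw [layerPotential_clm_comp L hS hσ.ae_mem hKm hp' hxS,
          iteratedFDeriv_layerPotential hS hσ.ae_mem hK.contDiffOn hp' hxS]
    _ = 0 := by
        rw [iteratedFDeriv_layerPotential_eval_eq_zero (by simpa) hσ hK hp hball, map_zero]

theorem stmt_1 (n k m : ℕ) (hn : 3 ≤ n) (hm : k + 1 ≤ m) (R : ℝ) (hR : 0 < R)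
    (v : Fin m → Fin n) (p : MvPolynomial (Fin n) ℝ) (hp : p.totalDegree ≤ k)
    (x : EuclideanSpace ℝ (Fin n)) (hx : ‖x‖ < R) :
    (∫ y in sphere (0 : EuclideanSpace ℝ (Fin n)) R,
        (iteratedFDeriv ℝ m (fun z => fundSol n (z - y)) x fun i => ee (v i)) *
          MvPolynomial.eval (fun i => y i) p
        ∂μH[(n : ℝ) - 1]) = 0 :=
  stmt_1_general (by omega) isRadialHarmonicKernel_fundSol (fun i ↦ ee (v i)) (by omega) hx
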